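/- arXiv:2505.16111 — 2 statements merged into one kernel-verified Lean document; each statement's English description precedes it below -/
import Mathlib

section
/- Let φ = (φ₁, φ₂) be a pair of N-functions, 1 ≤ p < ∞ and 1/p + 1/q = 1. If T = (T₁, T₂) ∈ ⊕_{j=1}^{2} S_{φ_j,p} with ‖T‖_{(φ),p} ≠ 0, then υ(φ(T / ‖T‖_{(φ),p})) = tr(φ₁(T₁/‖T‖_{(φ),p})) + tr(φ₂(T₂/‖T‖_{(φ),p})) ≤ 2^{1 − 1/p} = 2^{1/q}. -/
open scoped InnerProductSpace ENNReal Topology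
open Filter

/-- An Orlicz function (N-function): convex, nondecreasing and continuous on `[0, ∞)`,
vanishing at `0`, positive on `(0, ∞)` and tending to `∞` at `∞`. -/
structure OrliczFunction : Type where
  toFun : ℝ → ℝ
  convexOn : ConvexOn ℝ (Set.Ici (0 : ℝ)) toFun
  monotoneOn : MonotoneOn toFun (Set.Ici (0 : ℝ))
  continuousOn : ContinuousOn toFun (Set.Ici (0 : ℝ))
  map_zero : toFun 0 = 0
  pos : ∀ x : ℝ, 0 < x → 0 < toFun x
  tendsto_atTop : Filter.Tendsto toFun Filter.atTop Filter.atTop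

/-- `ψ` is the complementary N-function of `φ`: `ψ(y) = sup {x·y − φ(x) : x ≥ 0}`. -/
def OrliczFunction.IsComplementary (φ ψ : OrliczFunction) : Prop :=
  ∀ y : ℝ, 0 ≤ y → ψ.toFun y = sSup {v : ℝ | ∃ x : ℝ, 0 ≤ x ∧ v = x * y - φ.toFun x}

/-- `g` is the (two-sided) inverse of `f` on `[0, ∞)`, taking nonnegative values. -/
def IsOrliczInverse (g f : ℝ → ℝ) : Prop :=
  (∀ u : ℝ, 0 ≤ u → 0 ≤ g u) ∧ (∀ u : ℝ, 0 ≤ u → f (g u) = u) ∧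
    ∀ u : ℝ, 0 ≤ u → g (f u) = u

variable {H : Type} [NormedAddCommGroup H] [InnerProductSpace ℂ H] [CompleteSpace H]

/-- The `n`-th singular value of an operator `T` (indexed from `n = 0`), described as the
`n`-th approximation number: the distance from `T` to the operators of rank `≤ n`.  For a
compact operator on a Hilbert space this is exactly the `(n+1)`-st eigenvalue of
`|T| = (T*T)^(1/2)` in decreasing order. -/
noncomputable def sValue (T : H →L[ℂ] H) (n : ℕ) : ℝ :=
  sInf {c : ℝ | ∃ F : H →L[ℂ] H,
    Module.rank ℂ (LinearMap.range F.toLinearMap) ≤ (n : Cardinal) ∧ c = ‖T - F‖}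

/-- `tr(φ(|T|)) = Σ_n φ(s_n(T))`. -/
noncomputable def orliczSum (φ : OrliczFunction) (T : H →L[ℂ] H) : ℝ :=
  ∑' n : ℕ, φ.toFun (sValue T n)

/-- Membership in the noncommutative Orlicz sequence space `S_φ(H)`:
`T` is compact and `Σ_n φ(λ s_n(T)) < ∞` for some `λ > 0`. -/
def MemS (φ : OrliczFunction) (T : H →L[ℂ] H) : Prop :=
  IsCompactOperator (⇑T) ∧
    ∃ l : ℝ, 0 < l ∧ Summable fun n : ℕ => φ.toFun (l * sValue T n)

/-- The Luxemburg norm `‖T‖_(φ) = inf {λ > 0 : Σ_n φ(s_n(T)/λ) ≤ 1}`. -/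
noncomputable def luxNorm (φ : OrliczFunction) (T : H →L[ℂ] H) : ℝ :=
  sInf {l : ℝ | 0 < l ∧ (Summable fun n : ℕ => φ.toFun (sValue T n / l)) ∧
    ∑' n : ℕ, φ.toFun (sValue T n / l) ≤ 1}

/-- The Orlicz norm `‖T‖_φ = sup {tr |TB| : tr(ψ(B)) ≤ 1}`, expressed through the
complementary function `ψ` of `φ` (here `tr|TB| = Σ_n s_n(TB)`). -/
noncomputable def orlNormVia (ψ : OrliczFunction) (T : H →L[ℂ] H) : ℝ :=
  sSup {c : ℝ | ∃ B : H →L[ℂ] H, IsCompactOperator (⇑B) ∧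
    (Summable fun n : ℕ => ψ.toFun (sValue B n)) ∧
    (∑' n : ℕ, ψ.toFun (sValue B n)) ≤ 1 ∧ c = ∑' n : ℕ, sValue (T ∘L B) n}

/-- The norm `‖T‖_((φ),p) = (‖T₁‖_(φ₁)^p + ‖T₂‖_(φ₂)^p)^(1/p)` on 2-tuples. -/
noncomputable def luxNorm2 (φ₁ φ₂ : OrliczFunction) (p : ℝ) (T₁ T₂ : H →L[ℂ] H) : ℝ :=
  (luxNorm φ₁ T₁ ^ p + luxNorm φ₂ T₂ ^ p) ^ (1 / p)

/-- The Orlicz-type norm `‖T‖_(φ,p) = (‖T₁‖_φ₁^p + ‖T₂‖_φ₂^p)^(1/p)` on 2-tuples,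
where the Orlicz norms are computed via the complementary functions `ψ₁, ψ₂`. -/
noncomputable def orlNorm2 (ψ₁ ψ₂ : OrliczFunction) (p : ℝ) (T₁ T₂ : H →L[ℂ] H) : ℝ :=
  (orlNormVia ψ₁ T₁ ^ p + orlNormVia ψ₂ T₂ ^ p) ^ (1 / p)

/-- 2-tuple Luxemburg norm for an exponent `r ∈ [1, ∞]`. -/
noncomputable def luxNorm2E (φ₁ φ₂ : OrliczFunction) (r : ℝ≥0∞) (T₁ T₂ : H →L[ℂ] H) : ℝ :=
  if r = ⊤ then max (luxNorm φ₁ T₁) (luxNorm φ₂ T₂)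
  else (luxNorm φ₁ T₁ ^ r.toReal + luxNorm φ₂ T₂ ^ r.toReal) ^ (1 / r.toReal)

/-- The trace of an operator, computed along a Hilbert basis. -/
noncomputable def traceAlong {ι : Type} (b : HilbertBasis ι ℂ H) (T : H →L[ℂ] H) : ℂ :=
  ∑' i : ι, ⟪b i, T (b i)⟫_ℂ

/-- The Schatten `p`-norm `‖T‖_p = (Σ_n s_n(T)^p)^(1/p)`. -/
noncomputable def schattenNorm (p : ℝ) (T : H →L[ℂ] H) : ℝ :=
  (∑' n : ℕ, sValue T n ^ p) ^ (1 / p)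

/-- Membership in the Schatten class `S_p(H)`. -/
def MemSp (p : ℝ) (T : H →L[ℂ] H) : Prop :=
  IsCompactOperator (⇑T) ∧ Summable fun n : ℕ => sValue T n ^ p

/-- The nonsquare constant `J` of the noncommutative Orlicz space `S_φ(H)`
(with the Luxemburg norm). -/
noncomputable def JOrlicz (φ : OrliczFunction) : ℝ :=
  sSup {c : ℝ | ∃ T B : H →L[ℂ] H, MemS φ T ∧ MemS φ B ∧
    luxNorm φ T = 1 ∧ luxNorm φ B = 1 ∧
    c = min (luxNorm φ (T + B)) (luxNorm φ (T - B))}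

/-- The von Neumann–Jordan constant of `S_φ(H)` (with the Luxemburg norm): the smallest
`c > 0` such that `1/c ≤ (‖x+y‖² + ‖x−y‖²)/(2(‖x‖² + ‖y‖²)) ≤ c` for all `x, y` in
`S_φ(H)` not both zero. -/
noncomputable def cNJOrlicz (φ : OrliczFunction) : ℝ :=
  sInf {c : ℝ | 0 < c ∧ ∀ T B : H →L[ℂ] H, MemS φ T → MemS φ B → ¬(T = 0 ∧ B = 0) →
    1 / c ≤ (luxNorm φ (T + B) ^ 2 + luxNorm φ (T - B) ^ 2) /
        (2 * (luxNorm φ T ^ 2 + luxNorm φ B ^ 2)) ∧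
      (luxNorm φ (T + B) ^ 2 + luxNorm φ (T - B) ^ 2) /
        (2 * (luxNorm φ T ^ 2 + luxNorm φ B ^ 2)) ≤ c}

/-- The von Neumann–Jordan constant of the Schatten class `S_p(H)`. -/
noncomputable def cNJSchatten (p : ℝ) : ℝ :=
  sInf {c : ℝ | 0 < c ∧ ∀ T B : H →L[ℂ] H, MemSp p T → MemSp p B → ¬(T = 0 ∧ B = 0) →
    1 / c ≤ (schattenNorm p (T + B) ^ 2 + schattenNorm p (T - B) ^ 2) /
        (2 * (schattenNorm p T ^ 2 + schattenNorm p B ^ 2)) ∧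
      (schattenNorm p (T + B) ^ 2 + schattenNorm p (T - B) ^ 2) /
        (2 * (schattenNorm p T ^ 2 + schattenNorm p B ^ 2)) ≤ c}

/-!
A convex `φ` vanishing at `0` is star-shaped, `φ (t x) ≤ t φ x` for `0 ≤ t ≤ 1`, so a Luxemburg
bound improves linearly: `∑ φ (sₙ / l) ≤ 1` gives `∑ φ (sₙ / N) ≤ l / N` for every `N ≥ l`.
Continuity of `φ` shows that every positive `N ≥ ‖T‖_(φ)` satisfies `∑ φ (sₙ / N) ≤ 1`, and together
these give `tr φ(T / N) ≤ ‖T‖_(φ) / N`. Taking for `N` the norm of a tuple and adding over its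
entries leaves the comparison of the `ℓ¹` and `ℓᵖ` norms of `(‖Tⱼ‖_(φⱼ))ⱼ`, which is Hölder's
inequality.
-/

section RpowSum

variable {ι : Type*} {s : Finset ι} {a : ι → ℝ} {p : ℝ}

lemma le_rpow_sum_rpow (ha : ∀ i ∈ s, 0 ≤ a i) (hp : 0 < p) {j : ι} (hj : j ∈ s) :
    a j ≤ (∑ i ∈ s, a i ^ p) ^ (1 / p) := by
  have hpow : ∀ i ∈ s, 0 ≤ a i ^ p := fun i hi => Real.rpow_nonneg (ha i hi) p
  rw [one_div, Real.le_rpow_inv_iff_of_pos (ha j hj) (Finset.sum_nonneg hpow) hp]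
  exact Finset.single_le_sum hpow hj

lemma sum_le_card_rpow_mul_rpow_sum_rpow (ha : ∀ i ∈ s, 0 ≤ a i) (hp : 1 ≤ p) :
    ∑ i ∈ s, a i ≤ (s.card : ℝ) ^ (1 - 1 / p) * (∑ i ∈ s, a i ^ p) ^ (1 / p) := by
  have hp0 : 0 < p := zero_lt_one.trans_le hp
  have hpow : 0 ≤ ∑ i ∈ s, a i ^ p := Finset.sum_nonneg fun i hi => Real.rpow_nonneg (ha i hi) p
  calc ∑ i ∈ s, a i
      ≤ ((s.card : ℝ) ^ (p - 1) * ∑ i ∈ s, a i ^ p) ^ p⁻¹ := by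
        rw [Real.le_rpow_inv_iff_of_pos (Finset.sum_nonneg ha) (by positivity) hp0]
        exact Real.rpow_sum_le_const_mul_sum_rpow_of_nonneg s hp ha
    _ = (s.card : ℝ) ^ (1 - 1 / p) * (∑ i ∈ s, a i ^ p) ^ (1 / p) := by
        rw [Real.mul_rpow (by positivity) hpow, ← Real.rpow_mul (by positivity)]
        congr 2 <;> field_simp

end RpowSum

namespace OrliczFunction

variable (φ : OrliczFunction)

lemma nonneg {x : ℝ} (hx : 0 ≤ x) : 0 ≤ φ.toFun x :=
  φ.map_zero.ge.trans (φ.monotoneOn Set.self_mem_Ici hx hx)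

lemma map_mul_le {t x : ℝ} (ht₀ : 0 ≤ t) (ht₁ : t ≤ 1) (hx : 0 ≤ x) :
    φ.toFun (t * x) ≤ t * φ.toFun x := by
  simpa [φ.map_zero] using
    φ.convexOn.2 hx Set.self_mem_Ici ht₀ (sub_nonneg.2 ht₁) (add_sub_cancel t 1)

variable {ι : Type*} {s : ι → ℝ} {l m : ℝ}

lemma sum_map_div_le (hs : ∀ i, 0 ≤ s i) (hl : 0 < l) (hlm : l ≤ m) (u : Finset ι) :
    ∑ i ∈ u, φ.toFun (s i / m) ≤ l / m * ∑ i ∈ u, φ.toFun (s i / l) := by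
  have hm : 0 < m := hl.trans_le hlm
  rw [Finset.mul_sum]
  refine Finset.sum_le_sum fun i _ => ?_
  simpa only [div_mul_div_comm, mul_comm m l, mul_div_mul_left _ _ hl.ne'] using
    φ.map_mul_le (by positivity) ((div_le_one hm).2 hlm) (div_nonneg (hs i) hl.le)

/-- The scales `l` admissible in the Luxemburg norm of a family `s`, so that `luxNorm φ T` is by
definition the infimum of `φ.luxSet (sValue T)`. -/
def luxSet (s : ι → ℝ) : Set ℝ :=
  {l | 0 < l ∧ (Summable fun i => φ.toFun (s i / l)) ∧ ∑' i, φ.toFun (s i / l) ≤ 1}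

variable {φ}

lemma mem_luxSet_iff_forall_sum_le_one (hs : ∀ i, 0 ≤ s i) (hl : 0 < l) :
    l ∈ φ.luxSet s ↔ ∀ u : Finset ι, ∑ i ∈ u, φ.toFun (s i / l) ≤ 1 := by
  have hφ : ∀ i, 0 ≤ φ.toFun (s i / l) := fun i => φ.nonneg (div_nonneg (hs i) hl.le)
  exact ⟨fun h u => (h.2.1.sum_le_tsum u fun i _ => hφ i).trans h.2.2, fun h =>
    ⟨hl, summable_of_sum_le hφ h, Real.tsum_le_of_sum_le hφ h⟩⟩

lemma luxSet_nonempty (hs : ∀ i, 0 ≤ s i) (hl : 0 < l)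
    (hsum : Summable fun i => φ.toFun (s i / l)) : (φ.luxSet s).Nonempty := by
  have hφ : ∀ i, 0 ≤ φ.toFun (s i / l) := fun i => φ.nonneg (div_nonneg (hs i) hl.le)
  set S := ∑' i, φ.toFun (s i / l)
  have hS : 0 ≤ S := tsum_nonneg hφ
  have hm : 0 < (1 + S) * l := by positivity
  refine ⟨(1 + S) * l, (mem_luxSet_iff_forall_sum_le_one hs hm).2 fun u => ?_⟩
  calc ∑ i ∈ u, φ.toFun (s i / ((1 + S) * l))
      ≤ l / ((1 + S) * l) * ∑ i ∈ u, φ.toFun (s i / l) :=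
        φ.sum_map_div_le hs hl (le_mul_of_one_le_left hl.le (by linarith)) u
    _ ≤ l / ((1 + S) * l) * S := by
        gcongr
        exact hsum.sum_le_tsum u fun i _ => hφ i
    _ = S / (1 + S) := by field_simp
    _ ≤ 1 := (div_le_one (by positivity)).2 (by linarith)

lemma sum_map_div_le_of_mem_luxSet (hs : ∀ i, 0 ≤ s i) (hl : l ∈ φ.luxSet s) (hlm : l ≤ m)
    (u : Finset ι) : ∑ i ∈ u, φ.toFun (s i / m) ≤ l / m :=
  (φ.sum_map_div_le hs hl.1 hlm u).trans <|
    mul_le_of_le_one_right (div_nonneg hl.1.le (hl.1.trans_le hlm).le) <|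
      (mem_luxSet_iff_forall_sum_le_one hs hl.1).1 hl u

lemma isUpperSet_luxSet (hs : ∀ i, 0 ≤ s i) : IsUpperSet (φ.luxSet s) := fun _ m hlm hl =>
  have hm : 0 < m := hl.1.trans_le hlm
  (mem_luxSet_iff_forall_sum_le_one hs hm).2 fun u =>
    (sum_map_div_le_of_mem_luxSet hs hl hlm u).trans ((div_le_one hm).2 hlm)

lemma continuousOn_sum_map_div (hs : ∀ i, 0 ≤ s i) (u : Finset ι) :
    ContinuousOn (fun l => ∑ i ∈ u, φ.toFun (s i / l)) (Set.Ioi 0) :=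
  continuousOn_finsetSum u fun i _ => φ.continuousOn.comp
    (continuousOn_const.div continuousOn_id fun _ hl => ne_of_gt hl)
    fun _ hl => div_nonneg (hs i) (le_of_lt hl)

lemma mem_luxSet_of_sInf_le (hs : ∀ i, 0 ≤ s i) (hne : (φ.luxSet s).Nonempty) (hl : 0 < l)
    (hle : sInf (φ.luxSet s) ≤ l) : l ∈ φ.luxSet s := by
  refine (mem_luxSet_iff_forall_sum_le_one hs hl).2 fun u => ?_
  have hright : ∀ m, l < m → ∑ i ∈ u, φ.toFun (s i / m) ≤ 1 := fun m hlm => by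
    obtain ⟨k, hk, hkm⟩ := exists_lt_of_csInf_lt hne (hle.trans_lt hlm)
    exact (mem_luxSet_iff_forall_sum_le_one hs (hl.trans hlm)).1
      (isUpperSet_luxSet hs hkm.le hk) u
  have hcont := (continuousOn_sum_map_div (φ := φ) hs u).continuousAt (Ioi_mem_nhds hl)
  exact le_of_tendsto (hcont.tendsto.mono_left nhdsWithin_le_nhds)
    (eventually_nhdsWithin_of_forall (s := Set.Ioi l) hright)

lemma tsum_map_div_le (hs : ∀ i, 0 ≤ s i) (hne : (φ.luxSet s).Nonempty) (hm : 0 < m)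
    (hle : sInf (φ.luxSet s) ≤ m) :
    ∑' i, φ.toFun (s i / m) ≤ sInf (φ.luxSet s) / m := by
  rw [le_div_iff₀ hm]
  refine le_csInf hne fun l hl => (le_div_iff₀ hm).1 ?_
  rcases le_total l m with hlm | hml
  · exact Real.tsum_le_of_sum_le (fun i => φ.nonneg (div_nonneg (hs i) hm.le))
      (sum_map_div_le_of_mem_luxSet hs hl hlm)
  · exact (mem_luxSet_of_sInf_le hs hne hm hle).2.2.trans ((one_le_div hm).2 hml)

end OrliczFunction

section Operators

variable {E : Type} [NormedAddCommGroup E] [InnerProductSpace ℂ E]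

lemma sValue_nonneg (T : E →L[ℂ] E) (n : ℕ) : 0 ≤ sValue T n := by
  refine Real.sInf_nonneg ?_
  rintro _ ⟨F, -, rfl⟩
  exact norm_nonneg _

lemma sValue_le (T : E →L[ℂ] E) {n : ℕ} {F : E →L[ℂ] E}
    (hF : Module.rank ℂ (LinearMap.range F.toLinearMap) ≤ n) : sValue T n ≤ ‖T - F‖ := by
  refine csInf_le ⟨0, ?_⟩ ⟨F, hF, rfl⟩
  rintro _ ⟨G, -, rfl⟩
  exact norm_nonneg _

lemma le_sValue {T : E →L[ℂ] E} {n : ℕ} {c : ℝ}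
    (h : ∀ F : E →L[ℂ] E, Module.rank ℂ (LinearMap.range F.toLinearMap) ≤ n → c ≤ ‖T - F‖) :
    c ≤ sValue T n := by
  refine le_csInf ⟨_, 0, by simp, rfl⟩ ?_
  rintro _ ⟨F, hF, rfl⟩
  exact h F hF

lemma norm_mul_sValue_le (c : ℂ) (T : E →L[ℂ] E) (n : ℕ) :
    ‖c‖ * sValue T n ≤ sValue (c • T) n := by
  rcases eq_or_ne c 0 with rfl | hc
  · simpa using sValue_nonneg (0 : E →L[ℂ] E) n
  refine le_sValue fun F hF => ?_
  have hF' : Module.rank ℂ (LinearMap.range (c⁻¹ • F).toLinearMap) ≤ n :=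
    (Submodule.rank_mono (LinearMap.range_smul_le_range F.toLinearMap c⁻¹)).trans hF
  calc ‖c‖ * sValue T n ≤ ‖c‖ * ‖T - c⁻¹ • F‖ := by gcongr; exact sValue_le T hF'
    _ = ‖c • T - F‖ := by rw [← norm_smul, smul_sub, smul_inv_smul₀ hc]

lemma sValue_smul (c : ℂ) (T : E →L[ℂ] E) (n : ℕ) : sValue (c • T) n = ‖c‖ * sValue T n := by
  refine le_antisymm ?_ (norm_mul_sValue_le c T n)
  rcases eq_or_ne c 0 with rfl | hc
  · simpa using sValue_le (0 : E →L[ℂ] E) (n := n) (F := 0) (by simp)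
  rw [← inv_mul_le_iff₀ (norm_pos_iff.2 hc)]
  simpa only [norm_inv, inv_smul_smul₀ hc] using norm_mul_sValue_le c⁻¹ (c • T) n

lemma luxNorm_nonneg (φ : OrliczFunction) (T : E →L[ℂ] E) : 0 ≤ luxNorm φ T :=
  Real.sInf_nonneg fun _ hl => hl.1.le

lemma MemS.luxSet_nonempty {φ : OrliczFunction} {T : E →L[ℂ] E} (hT : MemS φ T) :
    (φ.luxSet (sValue T)).Nonempty := by
  obtain ⟨-, l, hl, hsum⟩ := hT
  refine OrliczFunction.luxSet_nonempty (sValue_nonneg T) (inv_pos.2 hl) ?_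
  simpa only [div_inv_eq_mul, mul_comm] using hsum

lemma orliczSum_inv_smul_le {φ : OrliczFunction} {T : E →L[ℂ] E} (hT : MemS φ T) {N : ℝ}
    (hN : 0 < N) (hle : luxNorm φ T ≤ N) :
    orliczSum φ ((N : ℂ)⁻¹ • T) ≤ luxNorm φ T / N := by
  have hscale : ∀ n, sValue ((N : ℂ)⁻¹ • T) n = sValue T n / N := fun n => by
    rw [sValue_smul, norm_inv, Complex.norm_of_nonneg hN.le, inv_mul_eq_div]
  simp only [orliczSum, hscale]
  exact OrliczFunction.tsum_map_div_le (sValue_nonneg T) hT.luxSet_nonempty hN hle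

variable {ι : Type*} [Fintype ι]

/-- The norm `(∑ⱼ ‖Tⱼ‖_(φⱼ)^p)^(1/p)` on finite tuples of operators, extending `luxNorm2` from
pairs to an arbitrary finite index type. -/
noncomputable def luxNormPi (φ : ι → OrliczFunction) (p : ℝ) (T : ι → E →L[ℂ] E) : ℝ :=
  (∑ i, luxNorm (φ i) (T i) ^ p) ^ (1 / p)

lemma luxNorm2_eq_luxNormPi (φ₁ φ₂ : OrliczFunction) (p : ℝ) (T₁ T₂ : E →L[ℂ] E) :
    luxNorm2 φ₁ φ₂ p T₁ T₂ = luxNormPi ![φ₁, φ₂] p ![T₁, T₂] := by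
  simp [luxNorm2, luxNormPi]

lemma luxNormPi_nonneg (φ : ι → OrliczFunction) (p : ℝ) (T : ι → E →L[ℂ] E) :
    0 ≤ luxNormPi φ p T :=
  Real.rpow_nonneg (Finset.sum_nonneg fun i _ => Real.rpow_nonneg (luxNorm_nonneg (φ i) (T i)) p) _

theorem stmt4_general (φ : ι → OrliczFunction) {p : ℝ} (hp : 1 ≤ p) (T : ι → E →L[ℂ] E)
    (hT : ∀ i, MemS (φ i) (T i)) (hN : luxNormPi φ p T ≠ 0) :
    ∑ i, orliczSum (φ i) ((luxNormPi φ p T : ℂ)⁻¹ • T i) ≤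
      (Fintype.card ι : ℝ) ^ (1 - 1 / p) := by
  have hNpos : 0 < luxNormPi φ p T := (luxNormPi_nonneg φ p T).lt_of_ne' hN
  have hnorm : ∀ i ∈ Finset.univ, 0 ≤ luxNorm (φ i) (T i) := fun i _ => luxNorm_nonneg (φ i) (T i)
  have hle : ∀ i, luxNorm (φ i) (T i) ≤ luxNormPi φ p T := fun i =>
    le_rpow_sum_rpow hnorm (zero_lt_one.trans_le hp) (Finset.mem_univ i)
  calc ∑ i, orliczSum (φ i) ((luxNormPi φ p T : ℂ)⁻¹ • T i)
      ≤ ∑ i, luxNorm (φ i) (T i) / luxNormPi φ p T :=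
        Finset.sum_le_sum fun i _ => orliczSum_inv_smul_le (hT i) hNpos (hle i)
    _ = (∑ i, luxNorm (φ i) (T i)) / luxNormPi φ p T := (Finset.sum_div ..).symm
    _ ≤ (Fintype.card ι : ℝ) ^ (1 - 1 / p) :=
        (div_le_iff₀ hNpos).2 (sum_le_card_rpow_mul_rpow_sum_rpow hnorm hp)

end Operators

/-- if `‖T‖_((φ),p) ≠ 0` then
`υ(φ(T/‖T‖_((φ),p))) ≤ 2^(1 − 1/p) = 2^(1/q)`. -/
theorem stmt4 {H : Type} [NormedAddCommGroup H] [InnerProductSpace ℂ H]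
    [CompleteSpace H] [TopologicalSpace.SeparableSpace H]
    (φ₁ φ₂ : OrliczFunction) (p q : ℝ) (hp : 1 ≤ p) (hpq : 1 / p + 1 / q = 1)
    (T₁ T₂ : H →L[ℂ] H) (hT₁ : MemS φ₁ T₁) (hT₂ : MemS φ₂ T₂)
    (hN : luxNorm2 φ₁ φ₂ p T₁ T₂ ≠ 0) :
    orliczSum φ₁ (((luxNorm2 φ₁ φ₂ p T₁ T₂ : ℂ))⁻¹ • T₁) +
        orliczSum φ₂ (((luxNorm2 φ₁ φ₂ p T₁ T₂ : ℂ))⁻¹ • T₂) ≤ (2 : ℝ) ^ (1 - 1 / p) ∧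
      (2 : ℝ) ^ (1 - 1 / p) = (2 : ℝ) ^ (1 / q) := by
  rw [luxNorm2_eq_luxNormPi] at hN ⊢
  exact ⟨by simpa using stmt4_general ![φ₁, φ₂] hp ![T₁, T₂] (Fin.forall_fin_two.2 ⟨hT₁, hT₂⟩) hN,
    by rw [sub_eq_of_eq_add' hpq.symm]⟩
end

section
/- For any Banach space X (with at least two linearly independent vectors), the nonsquare constant and the von Neumann–Jordan constant satisfy J(X)² ≤ 2 · c_NJ(X). -/
open scoped InnerProductSpace ENNReal Topology
open Filter

variable {H : Type} [NormedAddCommGroup H] [InnerProductSpace ℂ H] [CompleteSpace H]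

/-- The nonsquare constant `J(X) = sup {min(‖x+y‖, ‖x−y‖) : ‖x‖ = ‖y‖ = 1}`. -/
noncomputable def nonsquareConst (X : Type) [NormedAddCommGroup X] [NormedSpace ℝ X] : ℝ :=
  sSup {c : ℝ | ∃ x y : X, ‖x‖ = 1 ∧ ‖y‖ = 1 ∧ c = min ‖x + y‖ ‖x - y‖}

/-- The von Neumann–Jordan constant of a Banach space `X`: the smallest `c > 0` such that
`1/c ≤ (‖x+y‖² + ‖x−y‖²)/(2(‖x‖² + ‖y‖²)) ≤ c` for all `x, y ∈ X` not both zero. -/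
noncomputable def vNJConst (X : Type) [NormedAddCommGroup X] [NormedSpace ℝ X] : ℝ :=
  sInf {c : ℝ | 0 < c ∧ ∀ x y : X, ¬(x = 0 ∧ y = 0) →
    1 / c ≤ (‖x + y‖ ^ 2 + ‖x - y‖ ^ 2) / (2 * (‖x‖ ^ 2 + ‖y‖ ^ 2)) ∧
      (‖x + y‖ ^ 2 + ‖x - y‖ ^ 2) / (2 * (‖x‖ ^ 2 + ‖y‖ ^ 2)) ≤ c}

/-!
Every parallelogram quotient `(‖x + y‖² + ‖x - y‖²) / (2 (‖x‖² + ‖y‖²))` lies in `[1/2, 2]`: the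
upper bound is the triangle inequality, and the lower bound is the upper bound applied to `x + y`
and `x - y`. So the infimum defining `c_NJ` runs over a nonempty set, and therefore bounds each of
these quotients. For unit vectors this gives
`2 min(‖x + y‖, ‖x - y‖)² ≤ ‖x + y‖² + ‖x - y‖² ≤ 4 c_NJ`, and `J` is the supremum of these minima.
-/

theorem two_mul_min_sq_le {R : Type*} [CommRing R] [LinearOrder R] [IsStrictOrderedRing R]
    {a b : R} (ha : 0 ≤ a) (hb : 0 ≤ b) : 2 * min a b ^ 2 ≤ a ^ 2 + b ^ 2 := by
  have hmin : 0 ≤ min a b := le_min ha hb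
  rw [two_mul]
  exact add_le_add (pow_le_pow_left₀ hmin (min_le_left a b) 2)
    (pow_le_pow_left₀ hmin (min_le_right a b) 2)

section Parallelogram

theorem norm_add_sq_add_norm_sub_sq_le {E : Type*} [SeminormedAddCommGroup E] (x y : E) :
    ‖x + y‖ ^ 2 + ‖x - y‖ ^ 2 ≤ 4 * (‖x‖ ^ 2 + ‖y‖ ^ 2) :=
  calc ‖x + y‖ ^ 2 + ‖x - y‖ ^ 2 ≤ (‖x‖ + ‖y‖) ^ 2 + (‖x‖ + ‖y‖) ^ 2 := by
        gcongr
        exacts [norm_add_le x y, norm_sub_le x y]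
    _ ≤ 2 * (‖x‖ ^ 2 + ‖y‖ ^ 2) + 2 * (‖x‖ ^ 2 + ‖y‖ ^ 2) := add_le_add add_sq_le add_sq_le
    _ = 4 * (‖x‖ ^ 2 + ‖y‖ ^ 2) := by ring

theorem norm_sq_add_norm_sq_le {E : Type*} [SeminormedAddCommGroup E] [NormedSpace ℝ E] (x y : E) :
    ‖x‖ ^ 2 + ‖y‖ ^ 2 ≤ ‖x + y‖ ^ 2 + ‖x - y‖ ^ 2 := by
  have h := norm_add_sq_add_norm_sub_sq_le (x + y) (x - y)
  rw [add_add_sub_cancel, add_sub_sub_cancel, ← two_smul ℝ x, ← two_smul ℝ y, norm_smul, norm_smul,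
    Real.norm_two] at h
  linarith

theorem norm_sq_add_norm_sq_pos {E : Type*} [NormedAddCommGroup E] {x y : E}
    (hxy : ¬(x = 0 ∧ y = 0)) : 0 < ‖x‖ ^ 2 + ‖y‖ ^ 2 := by
  rcases not_and_or.mp hxy with hx | hy
  · exact add_pos_of_pos_of_nonneg (pow_pos (norm_pos_iff.mpr hx) 2) (sq_nonneg _)
  · exact add_pos_of_nonneg_of_pos (sq_nonneg _) (pow_pos (norm_pos_iff.mpr hy) 2)

theorem parallelogram_quotient_mem_Icc {E : Type*} [NormedAddCommGroup E] [NormedSpace ℝ E]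
    {x y : E} (hxy : ¬(x = 0 ∧ y = 0)) :
    (‖x + y‖ ^ 2 + ‖x - y‖ ^ 2) / (2 * (‖x‖ ^ 2 + ‖y‖ ^ 2)) ∈ Set.Icc (1 / 2) 2 := by
  have hpos := norm_sq_add_norm_sq_pos hxy
  rw [Set.mem_Icc, le_div_iff₀ (by positivity), div_le_iff₀ (by positivity)]
  constructor
  · linarith [norm_sq_add_norm_sq_le x y]
  · linarith [norm_add_sq_add_norm_sub_sq_le x y]

end Parallelogram

section Constants

variable {X : Type} [NormedAddCommGroup X] [NormedSpace ℝ X]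

theorem parallelogram_quotient_le_vNJConst {x y : X} (hxy : ¬(x = 0 ∧ y = 0)) :
    (‖x + y‖ ^ 2 + ‖x - y‖ ^ 2) / (2 * (‖x‖ ^ 2 + ‖y‖ ^ 2)) ≤ vNJConst X := by
  refine le_csInf ⟨2, two_pos, fun x y h ↦ parallelogram_quotient_mem_Icc h⟩ ?_
  rintro c ⟨-, hc⟩
  exact (hc x y hxy).2

theorem norm_add_sq_add_norm_sub_sq_le_vNJConst (x y : X) :
    ‖x + y‖ ^ 2 + ‖x - y‖ ^ 2 ≤ vNJConst X * (2 * (‖x‖ ^ 2 + ‖y‖ ^ 2)) := by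
  by_cases hxy : x = 0 ∧ y = 0
  · simp [hxy.1, hxy.2]
  · have hpos := norm_sq_add_norm_sq_pos hxy
    exact (div_le_iff₀ (by positivity)).mp (parallelogram_quotient_le_vNJConst hxy)

theorem min_norm_sq_le_two_mul_vNJConst {x y : X} (hx : ‖x‖ = 1) (hy : ‖y‖ = 1) :
    min ‖x + y‖ ‖x - y‖ ^ 2 ≤ 2 * vNJConst X := by
  have hmin := two_mul_min_sq_le (norm_nonneg (x + y)) (norm_nonneg (x - y))
  have hc := norm_add_sq_add_norm_sub_sq_le_vNJConst x y
  rw [hx, hy] at hc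
  linarith

variable (X) in
theorem vNJConst_nonneg : 0 ≤ vNJConst X :=
  Real.sInf_nonneg fun _ hc ↦ hc.1.le

variable (X) in
theorem nonsquareConst_nonneg : 0 ≤ nonsquareConst X := by
  refine Real.sSup_nonneg ?_
  rintro _ ⟨x, y, -, -, rfl⟩
  exact le_min (norm_nonneg _) (norm_nonneg _)

theorem nonsquareConst_le [Nontrivial X] {a : ℝ}
    (h : ∀ x y : X, ‖x‖ = 1 → ‖y‖ = 1 → min ‖x + y‖ ‖x - y‖ ≤ a) : nonsquareConst X ≤ a := by
  obtain ⟨u, hu⟩ := exists_norm_eq X zero_le_one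
  refine csSup_le ⟨_, u, u, hu, hu, rfl⟩ ?_
  rintro _ ⟨x, y, hx, hy, rfl⟩
  exact h x y hx hy

end Constants

theorem stmt13_general (X : Type) [NormedAddCommGroup X] [NormedSpace ℝ X] [Nontrivial X] :
    nonsquareConst X ^ 2 ≤ 2 * vNJConst X := by
  have hJ : nonsquareConst X ≤ √(2 * vNJConst X) := nonsquareConst_le fun _ _ hx hy ↦
    Real.le_sqrt_of_sq_le (min_norm_sq_le_two_mul_vNJConst hx hy)
  have hc : 0 ≤ 2 * vNJConst X := mul_nonneg zero_le_two (vNJConst_nonneg X)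
  exact (Real.le_sqrt (nonsquareConst_nonneg X) hc).mp hJ

/-- for any Banach space `X` (with at least two linearly independent
vectors), `J(X)² ≤ 2 c_NJ(X)`. -/
theorem stmt13 (X : Type) [NormedAddCommGroup X] [NormedSpace ℝ X] [CompleteSpace X]
    (hX : ∃ x y : X, LinearIndependent ℝ ![x, y]) :
    nonsquareConst X ^ 2 ≤ 2 * vNJConst X := by
  obtain ⟨x, _, hxy⟩ := hX
  have : Nontrivial X := ⟨x, 0, hxy.ne_zero 0⟩
  exact stmt13_general X
end
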